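/- Gauss's summation theorem: if Re(c − a − b) > 0 and c is not a nonpositive integer, then the hypergeometric series ∑_{k=0}^∞ (a)_k (b)_k / (k! (c)_k) converges and equals Γ(c)Γ(c−a−b) / (Γ(c−a)Γ(c−b)). -/

import Mathlib

/-! Write `t_k(c)` for the `k`-th term of the series and `F c` for its sum. The combination
`c (c - a - b) t_k(c) - (c - a) (c - b) t_k(c + 1)` of the terms of `F c` and `F (c + 1)`
telescopes, with boundary term `-c k t_k(c) → 0`, which gives
`c (c - a - b) F c = (c - a) (c - b) F (c + 1)`. Iterating,
`F c = (c - a)_n (c - b)_n / ((c)_n (c - a - b)_n) * F (c + n)`. As `n → ∞`, dominated convergence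
gives `F (c + n) → 1`, and Euler's limit formula for `Γ` evaluates the limit of the ratio of
Pochhammer symbols. The same limit formula shows that `t_k(c)` is `O(k ^ (a + b - c - 1))`,
hence that the series converges. -/

open Filter Topology Asymptotics Bornology

theorem ne_neg_natCast_of_re_pos {s : ℂ} (hs : 0 < s.re) (m : ℕ) : s ≠ -m := by
  rintro rfl
  rw [Complex.neg_re, Complex.natCast_re] at hs
  linarith [m.cast_nonneg (α := ℝ)]

section Pochhammer

theorem ascPochhammer_eval_eq_prod_range {R : Type*} [CommSemiring R] (n : ℕ) (x : R) :
    (ascPochhammer R n).eval x = ∏ j ∈ Finset.range n, (x + j) := by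
  induction n with
  | zero => simp
  | succ n ih => rw [ascPochhammer_succ_eval, ih, Finset.prod_range_succ]

theorem ascPochhammer_eval_ne_zero {R : Type*} [CommRing R] [IsDomain R] {x : R}
    (hx : ∀ m : ℕ, x ≠ -m) (n : ℕ) : (ascPochhammer R n).eval x ≠ 0 := by
  rw [Ne, ascPochhammer_eval_eq_zero_iff]
  rintro ⟨m, -, hm⟩
  exact hx m (by rw [hm, neg_neg])

theorem norm_ascPochhammer_eval_le_add {z : ℂ} (hz : 0 ≤ z.re) {r : ℝ} (hr : 0 ≤ r) (n : ℕ) :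
    ‖(ascPochhammer ℂ n).eval z‖ ≤ ‖(ascPochhammer ℂ n).eval (z + r)‖ := by
  simp only [ascPochhammer_eval_eq_prod_range, norm_prod]
  refine Finset.prod_le_prod (fun _ _ => norm_nonneg _) fun j _ => ?_
  rw [Complex.norm_def, Complex.norm_def, Complex.normSq_apply, Complex.normSq_apply]
  simp only [Complex.add_re, Complex.add_im, Complex.ofReal_re, Complex.ofReal_im,
    Complex.natCast_re, Complex.natCast_im, add_zero]
  gcongr <;> linarith

theorem tendsto_ascPochhammer_eval_div (s : ℂ) :
    Tendsto (fun n : ℕ => (ascPochhammer ℂ n).eval s / ((n : ℂ) ^ (s - 1) * n.factorial)) atTop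
      (𝓝 (Complex.Gamma s)⁻¹) := by
  rcases eq_or_ne (Complex.Gamma s) 0 with hs | hs
  · obtain ⟨m, rfl⟩ := (Complex.Gamma_eq_zero_iff s).1 hs
    rw [hs, inv_zero]
    refine tendsto_const_nhds.congr' ?_
    filter_upwards [eventually_gt_atTop m] with n hn
    rw [ascPochhammer_eval_neg_coe_nat_of_lt hn, zero_div]
  · have h := ((Complex.GammaSeq_tendsto_Gamma s).inv₀ hs).mul (tendsto_natCast_div_add_atTop s)
    rw [mul_one] at h
    refine h.congr' ?_
    filter_upwards [eventually_ne_atTop 0] with n hn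
    have hn' : (n : ℂ) ≠ 0 := Nat.cast_ne_zero.2 hn
    have hsn : (n : ℂ) + s ≠ 0 := fun h0 =>
      hs ((Complex.Gamma_eq_zero_iff s).2 ⟨n, eq_neg_of_add_eq_zero_right h0⟩)
    rw [Complex.GammaSeq, ← ascPochhammer_eval_eq_prod_range, ascPochhammer_succ_eval,
      Complex.cpow_sub _ _ hn', Complex.cpow_one, inv_div, add_comm s]
    field_simp

theorem tendsto_ascPochhammer_eval_ratio (x y : ℂ) {z w : ℂ} (hz : ∀ m : ℕ, z ≠ -m)
    (hw : ∀ m : ℕ, w ≠ -m) :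
    Tendsto (fun n : ℕ => (ascPochhammer ℂ n).eval x * (ascPochhammer ℂ n).eval y /
        ((ascPochhammer ℂ n).eval z * (ascPochhammer ℂ n).eval w) / (n : ℂ) ^ (x + y - z - w))
      atTop (𝓝 (Complex.Gamma z * Complex.Gamma w / (Complex.Gamma x * Complex.Gamma y))) := by
  have h := ((tendsto_ascPochhammer_eval_div x).mul (tendsto_ascPochhammer_eval_div y)).div
    ((tendsto_ascPochhammer_eval_div z).mul (tendsto_ascPochhammer_eval_div w))
    (mul_ne_zero (inv_ne_zero (Complex.Gamma_ne_zero hz)) (inv_ne_zero (Complex.Gamma_ne_zero hw)))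
  rw [← mul_inv, ← mul_inv, inv_div_inv] at h
  refine h.congr' ?_
  filter_upwards [eventually_ne_atTop 0] with n hn
  have hn' : (n : ℂ) ≠ 0 := Nat.cast_ne_zero.2 hn
  have hcpow (s : ℂ) : (n : ℂ) ^ s ≠ 0 := by simp [hn']
  have hexp : (n : ℂ) ^ (x - 1) * (n : ℂ) ^ (y - 1) =
      (n : ℂ) ^ (z - 1) * (n : ℂ) ^ (w - 1) * (n : ℂ) ^ (x + y - z - w) := by
    simp only [← Complex.cpow_add _ _ hn']
    ring_nf
  have hfac : (n.factorial : ℂ) ≠ 0 := Nat.cast_ne_zero.2 n.factorial_ne_zero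
  have hzn := ascPochhammer_eval_ne_zero hz n
  have hwn := ascPochhammer_eval_ne_zero hw n
  rw [Pi.div_apply, div_mul_div_comm, div_mul_div_comm, mul_mul_mul_comm, hexp, mul_mul_mul_comm]
  field_simp [hcpow]

end Pochhammer

section Coefficient

theorem tendsto_ordinaryHypergeometricCoefficient_cobounded {𝕜 : Type*} [NormedField 𝕜]
    (a b : 𝕜) (k : ℕ) :
    Tendsto (fun c => ordinaryHypergeometricCoefficient a b c k) (cobounded 𝕜)
      (𝓝 ((Pi.single 0 1 : ℕ → 𝕜) k)) := by
  rcases k.eq_zero_or_pos with rfl | hk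
  · simpa [ordinaryHypergeometricCoefficient] using tendsto_const_nhds
  · have hdeg : 0 < (ascPochhammer 𝕜 k).degree := by
      rwa [← Polynomial.natDegree_pos_iff_degree_pos, ascPochhammer_natDegree]
    have hinv : Tendsto (fun c : 𝕜 => ((ascPochhammer 𝕜 k).eval c)⁻¹) (cobounded 𝕜) (𝓝 0) :=
      tendsto_inv₀_cobounded.comp (tendsto_norm_atTop_iff_cobounded.1
        (Polynomial.tendsto_norm_atTop _ hdeg tendsto_norm_cobounded_atTop))
    rw [Pi.single_eq_of_ne hk.ne', ← mul_zero]
    exact hinv.const_mul _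

theorem ordinaryHypergeometricCoefficient_contiguous {K : Type*} [Field K] [CharZero K]
    (a b : K) {c : K} {k : ℕ} (hc : (ascPochhammer K (k + 1)).eval c ≠ 0) :
    c * (c - a - b) * ordinaryHypergeometricCoefficient a b c k -
        (c - a) * (c - b) * ordinaryHypergeometricCoefficient a b (c + 1) k =
      -c * ((k + 1 : ℕ) * ordinaryHypergeometricCoefficient a b c (k + 1)) -
        -c * (k * ordinaryHypergeometricCoefficient a b c k) := by
  have hshift : (ascPochhammer K (k + 1)).eval c = c * (ascPochhammer K k).eval (c + 1) := by
    simp [ascPochhammer_succ_left]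
  have hc0 : c ≠ 0 := left_ne_zero_of_mul (hshift ▸ hc)
  rw [ascPochhammer_succ_eval] at hc hshift
  obtain ⟨hck, hcadd⟩ := mul_ne_zero_iff.1 hc
  have hquot : (ascPochhammer K k).eval (c + 1) = (ascPochhammer K k).eval c * (c + k) / c := by
    rw [hshift, mul_div_cancel_left₀ _ hc0]
  have hfac : (k.factorial : K) ≠ 0 := Nat.cast_ne_zero.2 k.factorial_ne_zero
  have hk : (k : K) + 1 ≠ 0 := k.cast_add_one_ne_zero
  simp only [ordinaryHypergeometricCoefficient, hquot, ascPochhammer_succ_eval,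
    Nat.factorial_succ]
  push_cast
  field_simp
  ring

variable (a b : ℂ) {c : ℂ}

theorem isBigO_ordinaryHypergeometricCoefficient (hc : ∀ n : ℕ, c ≠ -n) :
    (fun k => ordinaryHypergeometricCoefficient a b c k) =O[atTop]
      fun k : ℕ => (k : ℂ) ^ (a + b - c - 1) := by
  have hone : ∀ n : ℕ, (1 : ℂ) ≠ -n := ne_neg_natCast_of_re_pos (by simp)
  refine isBigO_of_div_tendsto_nhds ?_ _
    ((tendsto_ascPochhammer_eval_ratio a b hc hone).congr fun k => ?_)
  · filter_upwards [eventually_ne_atTop 0] with k hk h0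
    simp [Complex.cpow_eq_zero_iff, hk] at h0
  · rw [Pi.div_apply, ascPochhammer_eval_one]
    ring

variable {a b}

theorem summable_ordinaryHypergeometricCoefficient (hc : ∀ n : ℕ, c ≠ -n)
    (hre : 0 < (c - a - b).re) : Summable (ordinaryHypergeometricCoefficient a b c) := by
  have hexp : 1 < (-(a + b - c - 1)).re := by
    simp only [Complex.neg_re, Complex.sub_re, Complex.add_re, Complex.one_re] at hre ⊢
    linarith
  have hpow : Summable fun k : ℕ => (k : ℂ) ^ (a + b - c - 1) := by
    simpa only [one_div, Complex.cpow_neg, inv_inv] using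
      Complex.summable_one_div_nat_cpow.2 hexp
  exact summable_of_isBigO_nat' hpow (isBigO_ordinaryHypergeometricCoefficient a b hc)

theorem tendsto_natCast_mul_ordinaryHypergeometricCoefficient (hc : ∀ n : ℕ, c ≠ -n)
    (hre : 0 < (c - a - b).re) :
    Tendsto (fun k : ℕ => (k : ℂ) * ordinaryHypergeometricCoefficient a b c k) atTop (𝓝 0) := by
  have hO : (fun k : ℕ => (k : ℂ) * ordinaryHypergeometricCoefficient a b c k) =O[atTop]
      fun k : ℕ => (k : ℝ) ^ (-(c - a - b).re) := by
    refine ((isBigO_refl (fun k : ℕ => (k : ℂ)) atTop).mul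
      (isBigO_ordinaryHypergeometricCoefficient a b hc)).trans ?_
    refine IsBigO.of_bound' ?_
    filter_upwards [eventually_gt_atTop 0] with k hk
    have hk' : (k : ℂ) ≠ 0 := Nat.cast_ne_zero.2 hk.ne'
    rw [Complex.cpow_sub _ _ hk', Complex.cpow_one, mul_div_cancel₀ _ hk',
      Complex.norm_natCast_cpow_of_pos hk, Real.norm_of_nonneg (by positivity)]
    have hexp : (a + b - c).re = -(c - a - b).re := by
      simp only [Complex.sub_re, Complex.add_re]
      ring
    exact (congrArg _ hexp).le
  exact hO.trans_tendsto ((tendsto_rpow_neg_atTop hre).comp tendsto_natCast_atTop_atTop)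

end Coefficient

section GaussSum

variable {a b c : ℂ}

theorem hasSum_ordinaryHypergeometric_one (hc : ∀ n : ℕ, c ≠ -n) (hre : 0 < (c - a - b).re) :
    HasSum (ordinaryHypergeometricCoefficient a b c) (ordinaryHypergeometric a b c (1 : ℂ)) := by
  simpa [ordinaryHypergeometric_eq_tsum] using
    (summable_ordinaryHypergeometricCoefficient hc hre).hasSum

theorem ordinaryHypergeometric_one_contiguous (hc : ∀ n : ℕ, c ≠ -n)
    (hre : 0 < (c - a - b).re) :
    c * (c - a - b) * ordinaryHypergeometric a b c (1 : ℂ) =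
      (c - a) * (c - b) * ordinaryHypergeometric a b (c + 1) (1 : ℂ) := by
  have hc1 : ∀ n : ℕ, c + 1 ≠ -n := fun n h => hc (n + 1) (by push_cast; linear_combination h)
  have hre1 : 0 < (c + 1 - a - b).re := by
    simp only [Complex.sub_re, Complex.add_re, Complex.one_re] at hre ⊢
    linarith
  have hsum := (((hasSum_ordinaryHypergeometric_one hc hre).mul_left (c * (c - a - b))).sub
    ((hasSum_ordinaryHypergeometric_one hc1 hre1).mul_left ((c - a) * (c - b)))).tendsto_sum_nat
  have hboundary := (tendsto_natCast_mul_ordinaryHypergeometricCoefficient hc hre).const_mul (-c)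
  rw [mul_zero] at hboundary
  refine sub_eq_zero.1 (tendsto_nhds_unique hsum (hboundary.congr fun n => ?_))
  rw [Finset.sum_congr rfl fun k _ => ordinaryHypergeometricCoefficient_contiguous a b
    (ascPochhammer_eval_ne_zero hc (k + 1)),
    Finset.sum_range_sub fun k : ℕ => -c * (k * ordinaryHypergeometricCoefficient a b c k)]
  simp

theorem ordinaryHypergeometric_one_add_natCast (hc : ∀ n : ℕ, c ≠ -n)
    (hre : 0 < (c - a - b).re) (n : ℕ) :
    (ascPochhammer ℂ n).eval c * (ascPochhammer ℂ n).eval (c - a - b) *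
        ordinaryHypergeometric a b c (1 : ℂ) =
      (ascPochhammer ℂ n).eval (c - a) * (ascPochhammer ℂ n).eval (c - b) *
        ordinaryHypergeometric a b (c + n) (1 : ℂ) := by
  induction n with
  | zero => simp
  | succ n ih =>
    have hcn : ∀ m : ℕ, c + n ≠ -m := fun m h =>
      hc (n + m) (by push_cast; linear_combination h)
    have hren : 0 < (c + n - a - b).re := by
      simp only [Complex.sub_re, Complex.add_re, Complex.natCast_re] at hre ⊢
      linarith [n.cast_nonneg (α := ℝ)]
    simp only [ascPochhammer_succ_eval]
    push_cast
    rw [← add_assoc]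
    linear_combination (c + n) * (c - a - b + n) * ih +
      (ascPochhammer ℂ n).eval (c - a) * (ascPochhammer ℂ n).eval (c - b) *
        ordinaryHypergeometric_one_contiguous hcn hren

variable (a b c)

theorem tendsto_ordinaryHypergeometric_one_add_natCast :
    Tendsto (fun n : ℕ => ordinaryHypergeometric a b (c + n) (1 : ℂ)) atTop (𝓝 1) := by
  obtain ⟨N, hN⟩ := exists_nat_gt (max (-c.re) (-(c - a - b).re))
  obtain ⟨hNc, hNabc⟩ := max_lt_iff.1 hN
  have hcN : 0 < (c + N).re := by
    rw [Complex.add_re, Complex.natCast_re]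
    linarith
  have hreN : 0 < (c + N - a - b).re := by
    simp only [Complex.sub_re, Complex.add_re, Complex.natCast_re] at hNabc ⊢
    linarith
  have hpole := ne_neg_natCast_of_re_pos hcN
  have hcobdd : Tendsto (fun n : ℕ => c + n) atTop (cobounded ℂ) :=
    (tendsto_const_add_cobounded c).comp tendsto_natCast_atTop_cobounded
  have hlim := tendsto_tsum_of_dominated_convergence
    (summable_ordinaryHypergeometricCoefficient hpole hreN).norm
    (fun k => (tendsto_ordinaryHypergeometricCoefficient_cobounded a b k).comp hcobdd) ?_
  · simpa [ordinaryHypergeometric_eq_tsum, tsum_pi_single] using hlim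
  · filter_upwards [eventually_ge_atTop N] with n hn k
    have hle := norm_ascPochhammer_eval_le_add hcN.le (Nat.cast_nonneg (α := ℝ) (n - N)) k
    have hcast : c + N + ((n - N : ℕ) : ℝ) = c + n := by
      push_cast [Nat.cast_sub hn]
      ring
    rw [hcast] at hle
    have hpos := norm_pos_iff.2 (ascPochhammer_eval_ne_zero hpole k)
    simp only [Function.comp_apply, ordinaryHypergeometricCoefficient, norm_mul, norm_inv]
    gcongr

variable {a b c}

theorem ordinaryHypergeometric_one (hc : ∀ n : ℕ, c ≠ -n) (hre : 0 < (c - a - b).re) :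
    ordinaryHypergeometric a b c (1 : ℂ) = Complex.Gamma c * Complex.Gamma (c - a - b) /
      (Complex.Gamma (c - a) * Complex.Gamma (c - b)) := by
  have hd := ne_neg_natCast_of_re_pos hre
  have hratio := tendsto_ascPochhammer_eval_ratio (c - a) (c - b) hc hd
  have hexp : c - a + (c - b) - c - (c - a - b) = 0 := by ring
  simp only [hexp, Complex.cpow_zero, div_one] at hratio
  have hlim := hratio.mul (tendsto_ordinaryHypergeometric_one_add_natCast a b c)
  rw [mul_one] at hlim
  refine tendsto_nhds_unique (tendsto_const_nhds.congr fun n => ?_) hlim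
  rw [div_mul_eq_mul_div, ← ordinaryHypergeometric_one_add_natCast hc hre, mul_div_cancel_left₀]
  exact mul_ne_zero (ascPochhammer_eval_ne_zero hc n) (ascPochhammer_eval_ne_zero hd n)

end GaussSum

/-- Gauss's summation theorem: if Re(c - a - b) > 0 and c is not a nonpositive integer,
then ∑_{k=0}^∞ (a)_k (b)_k / (k! (c)_k) = Γ(c)Γ(c-a-b)/(Γ(c-a)Γ(c-b)). -/
theorem gauss_summation (a b c : ℂ)
    (hc : ∀ n : ℕ, c ≠ -(n : ℂ))
    (hre : 0 < (c - a - b).re) :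
    HasSum
      (fun k : ℕ =>
        (ascPochhammer ℂ k).eval a * (ascPochhammer ℂ k).eval b /
          ((Nat.factorial k : ℂ) * (ascPochhammer ℂ k).eval c))
      (Complex.Gamma c * Complex.Gamma (c - a - b) /
        (Complex.Gamma (c - a) * Complex.Gamma (c - b))) := by
  rw [← ordinaryHypergeometric_one hc hre]
  convert hasSum_ordinaryHypergeometric_one hc hre using 2
  ring
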